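/- arXiv:0810.4122 — 2 statements merged into one kernel-verified Lean document; each statement's English description precedes it below -/
import Mathlib

section
/- For every integer k > 2 there is a constant K (depending only on k) such that for all nonzero real numbers a and b, the two-dimensional Lebesgue measure of the set {(t,u) ∈ ℝ² : |a·t² + b·u^k| ≤ 1} is at most K·|a|^{−1/2}·|b|^{−1/k}. -/
open MeasureTheory

open Module

/-!
A slice `{t : |a t² + c| ≤ 1}` lies, after division by `a`, in two intervals of length
`√(γ + ρ) - √(γ - ρ)` with `γ = -c / a` and `ρ = 1 / |a|`. Bounding this difference of square roots
shows that the slice has measure at most `4 |a|^{-1/2} (1 + |c|)^{-1/2}`. For `c = b u^k`,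
integrating over `u` (Tonelli) and substituting `y = |b|^{1/k} u` leaves a multiple of
`∫ (1 + |y|^k)^{-1/2} dy`, which is finite because `k / 2 > 1`. The same argument works for `u` in a
space of dimension `d`, where the substitution has Jacobian `|b|^{-d/k}` and the condition becomes
`k / 2 > d`.
-/

/-- Since `√` vanishes on negative numbers, the cases `c < r` and `c < -r` are included. -/
theorem ofPred_abs_sq_sub_le_subset (c r : ℝ) :
    {x : ℝ | |x ^ 2 - c| ≤ r} ⊆
      Set.Icc (√(c - r)) (√(c + r)) ∪ Set.Icc (-√(c + r)) (-√(c - r)) := by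
  intro x hx
  obtain ⟨hlower, hupper⟩ := abs_le.1 (Set.mem_ofPred.1 hx)
  have h_sqrt_le : √(c - r) ≤ |x| :=
    Real.sqrt_le_iff.2 ⟨abs_nonneg x, by rw [sq_abs]; linarith⟩
  have h_le_sqrt : |x| ≤ √(c + r) := Real.abs_le_sqrt (by linarith)
  rcases abs_choice x with h | h <;> rw [h] at h_sqrt_le h_le_sqrt
  · exact Or.inl ⟨h_sqrt_le, h_le_sqrt⟩
  · exact Or.inr ⟨by linarith, by linarith⟩

theorem sqrt_add_sub_sqrt_sub_le {r : ℝ} (hr : 0 < r) (c : ℝ) :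
    √(c + r) - √(c - r) ≤ 2 * r / √(r + |c|) := by
  rw [le_div_iff₀ (by positivity)]
  rcases le_total r c with hrc | hcr
  · have hle : √(c - r) ≤ √(c + r) := Real.sqrt_le_sqrt (by linarith)
    calc (√(c + r) - √(c - r)) * √(r + |c|)
        = (√(c + r) - √(c - r)) * √(c + r) := by
          rw [abs_of_nonneg (hr.le.trans hrc), add_comm r c]
      _ ≤ (√(c + r) - √(c - r)) * (√(c + r) + √(c - r)) :=
          mul_le_mul_of_nonneg_left (le_add_of_nonneg_right (Real.sqrt_nonneg _))
            (sub_nonneg.2 hle)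
      _ = √(c + r) ^ 2 - √(c - r) ^ 2 := by ring
      _ = 2 * r := by rw [Real.sq_sqrt (by linarith), Real.sq_sqrt (by linarith)]; ring
  · rw [Real.sqrt_eq_zero_of_nonpos (sub_nonpos.2 hcr), sub_zero,
      ← Real.sqrt_mul' _ (by positivity)]
    refine Real.sqrt_le_iff.2 ⟨by positivity, ?_⟩
    rcases abs_cases c with ⟨h, _⟩ | ⟨h, _⟩ <;> rw [h] <;> nlinarith [sq_nonneg c]

theorem volume_abs_sq_sub_le {r : ℝ} (hr : 0 < r) (c : ℝ) :
    volume {x : ℝ | |x ^ 2 - c| ≤ r} ≤ ENNReal.ofReal (4 * r / √(r + |c|)) := by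
  have hlength : 0 ≤ √(c + r) - √(c - r) := sub_nonneg.2 (Real.sqrt_le_sqrt (by linarith))
  calc volume {x : ℝ | |x ^ 2 - c| ≤ r}
      ≤ volume (Set.Icc (√(c - r)) (√(c + r))) + volume (Set.Icc (-√(c + r)) (-√(c - r))) :=
        (measure_mono (ofPred_abs_sq_sub_le_subset c r)).trans (measure_union_le _ _)
    _ = ENNReal.ofReal (2 * (√(c + r) - √(c - r))) := by
        rw [Real.volume_Icc, Real.volume_Icc, neg_sub_neg, ← ENNReal.ofReal_add hlength hlength,
          two_mul]
    _ ≤ ENNReal.ofReal (4 * r / √(r + |c|)) := by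
        apply ENNReal.ofReal_le_ofReal
        calc 2 * (√(c + r) - √(c - r)) ≤ 2 * (2 * r / √(r + |c|)) := by
              gcongr
              exact sqrt_add_sub_sqrt_sub_le hr c
          _ = 4 * r / √(r + |c|) := by ring

theorem volume_abs_mul_sq_add_le {a r : ℝ} (ha : a ≠ 0) (hr : 0 < r) (c : ℝ) :
    volume {t : ℝ | |a * t ^ 2 + c| ≤ r} ≤ ENNReal.ofReal (4 * r / √(|a| * (r + |c|))) := by
  have ha' : 0 < |a| := abs_pos.2 ha
  have hset : {t : ℝ | |a * t ^ 2 + c| ≤ r} = {t : ℝ | |t ^ 2 - -c / a| ≤ r / |a|} := by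
    ext t
    have hfactor : a * t ^ 2 + c = a * (t ^ 2 - -c / a) := by field_simp; ring
    rw [Set.mem_ofPred, Set.mem_ofPred, hfactor, abs_mul, le_div_iff₀' ha']
  have hbound : 4 * (r / |a|) / √(r / |a| + |-c / a|) = 4 * r / √(|a| * (r + |c|)) := by
    rw [abs_div, abs_neg, ← add_div, Real.sqrt_div' _ ha'.le, Real.sqrt_mul ha'.le]
    nth_rewrite 1 [← Real.mul_self_sqrt ha'.le]
    field_simp
  rw [hset, ← hbound]
  exact volume_abs_sq_sub_le (div_pos hr ha') _

theorem volume_prod_abs_mul_sq_add_le {α : Type*} [MeasurableSpace α] (μ : Measure α) [SFinite μ]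
    {f : α → ℝ} (hf : Measurable f) {a r : ℝ} (ha : a ≠ 0) (hr : 0 < r) :
    (volume.prod μ) {p : ℝ × α | |a * p.1 ^ 2 + f p.2| ≤ r} ≤
      ∫⁻ u, ENNReal.ofReal (4 * r / √(|a| * (r + |f u|))) ∂μ := by
  have hmeas : MeasurableSet {p : ℝ × α | |a * p.1 ^ 2 + f p.2| ≤ r} :=
    measurableSet_le (by fun_prop) measurable_const
  rw [Measure.prod_apply_symm hmeas]
  exact lintegral_mono fun u => volume_abs_mul_sq_add_le ha hr (f u)

theorem rpow_neg_one_add_rpow_le {x s r : ℝ} (hx : 0 ≤ x) (hs : 0 < s) (hr : 0 ≤ r) :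
    (1 + x ^ s) ^ (-r / s) ≤ 2 ^ r * (1 + x) ^ (-r) := by
  have hmax : (1 + x) / 2 ≤ max 1 x := by
    linarith [le_max_left 1 x, le_max_right 1 x]
  have hpow : ((1 + x) / 2) ^ s ≤ 1 + x ^ s := by
    have hxs : 0 ≤ x ^ s := Real.rpow_nonneg hx s
    refine (Real.rpow_le_rpow (by positivity) hmax hs.le).trans ?_
    rcases max_choice 1 x with h | h <;> rw [h]
    · simpa using hxs
    · linarith
  calc (1 + x ^ s) ^ (-r / s) ≤ (((1 + x) / 2) ^ s) ^ (-r / s) :=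
        Real.rpow_le_rpow_of_nonpos (by positivity) hpow
          (div_nonpos_of_nonpos_of_nonneg (neg_nonpos.2 hr) hs.le)
    _ = ((1 + x) / 2) ^ (-r) := by
        rw [← Real.rpow_mul (by positivity), mul_div_cancel₀ _ hs.ne']
    _ = 2 ^ r * (1 + x) ^ (-r) := by
        rw [Real.div_rpow (by positivity) zero_le_two, Real.rpow_neg zero_le_two, div_inv_eq_mul,
          mul_comm]

section AddHaar

variable {E : Type*} [NormedAddCommGroup E] [NormedSpace ℝ E] [FiniteDimensional ℝ E]
  [MeasurableSpace E] [BorelSpace E] (μ : Measure E) [μ.IsAddHaarMeasure]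

theorem integrable_rpow_neg_one_add_norm_rpow {s r : ℝ} (hs : 0 < s) (hr : finrank ℝ E < r) :
    Integrable (fun x : E => (1 + ‖x‖ ^ s) ^ (-r / s)) μ := by
  have hr0 : 0 ≤ r := (Nat.cast_nonneg _).trans hr.le
  refine ((integrable_one_add_norm hr).const_mul (2 ^ r)).mono'
    (Measurable.aestronglyMeasurable (by fun_prop)) (.of_forall fun x => ?_)
  rw [Real.norm_of_nonneg (by positivity)]
  exact rpow_neg_one_add_rpow_le (norm_nonneg x) hs hr0

theorem integrable_inv_sqrt_one_add_norm_rpow {s : ℝ} (hs : 2 * finrank ℝ E < s) :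
    Integrable (fun x : E => (√(1 + ‖x‖ ^ s))⁻¹) μ := by
  have hs0 : 0 < s := lt_of_le_of_lt (by positivity) hs
  convert integrable_rpow_neg_one_add_norm_rpow μ (r := s / 2) hs0 (by linarith) using 2 with x
  rw [Real.sqrt_eq_rpow, ← Real.rpow_neg (by positivity)]
  congr 1
  field_simp

theorem integral_inv_sqrt_one_add_norm_rpow_pos {s : ℝ} (hs : 2 * finrank ℝ E < s) :
    0 < ∫ x : E, (√(1 + ‖x‖ ^ s))⁻¹ ∂μ := by
  have hsupport : Function.support (fun x : E => (√(1 + ‖x‖ ^ s))⁻¹) = Set.univ :=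
    Function.support_eq_univ fun x => by positivity
  rw [integral_pos_iff_support_of_nonneg (fun x => by positivity)
    (integrable_inv_sqrt_one_add_norm_rpow μ hs), hsupport]
  exact NeZero.pos _

theorem lintegral_ofReal_inv_sqrt_one_add_mul_norm_rpow {s b : ℝ} (hs : 2 * finrank ℝ E < s)
    (hb : 0 < b) :
    ∫⁻ u, ENNReal.ofReal (√(1 + b * ‖u‖ ^ s))⁻¹ ∂μ =
      ENNReal.ofReal (b ^ (-(finrank ℝ E / s)) * ∫ u, (√(1 + ‖u‖ ^ s))⁻¹ ∂μ) := by
  have hs0 : 0 < s := lt_of_le_of_lt (by positivity) hs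
  set β : ℝ := b ^ s⁻¹ with hβ
  have hβ0 : 0 < β := Real.rpow_pos_of_pos hb _
  have hscale (u : E) : b * ‖u‖ ^ s = ‖β • u‖ ^ s := by
    rw [norm_smul, Real.norm_of_nonneg hβ0.le, Real.mul_rpow hβ0.le (norm_nonneg u),
      Real.rpow_inv_rpow hb.le hs0.ne']
  have hjacobian : |(β ^ finrank ℝ E)⁻¹| = b ^ (-(finrank ℝ E / s)) := by
    rw [abs_of_pos (by positivity), hβ, ← Real.rpow_mul_natCast hb.le, ← Real.rpow_neg hb.le]
    congr 2
    ring
  have hint := (integrable_inv_sqrt_one_add_norm_rpow μ hs).comp_smul hβ0.ne'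
  simp_rw [hscale]
  rw [← ofReal_integral_eq_lintegral_ofReal hint (.of_forall fun u => by positivity),
    Measure.integral_comp_smul μ (fun u => (√(1 + ‖u‖ ^ s))⁻¹), hjacobian, smul_eq_mul]

theorem measure_abs_tt_uk_le_general {s : ℝ} (hs : 2 * finrank ℝ E < s) :
    ∃ K : ℝ, 0 < K ∧ ∀ a b : ℝ, a ≠ 0 → b ≠ 0 →
      ∀ f : E → ℝ, Measurable f → (∀ u, ‖u‖ ^ s ≤ |f u|) →
        (volume.prod μ) {p : ℝ × E | |a * p.1 ^ 2 + b * f p.2| ≤ 1} ≤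
          ENNReal.ofReal (K * |a| ^ (-(1 / 2) : ℝ) * |b| ^ (-(finrank ℝ E / s))) := by
  have hpos := integral_inv_sqrt_one_add_norm_rpow_pos μ hs
  refine ⟨4 * ∫ u, (√(1 + ‖u‖ ^ s))⁻¹ ∂μ, by positivity, fun a b ha hb f hf hsf => ?_⟩
  have hslice (u : E) : 4 * 1 / √(|a| * (1 + |b * f u|)) ≤
      4 * |a| ^ (-(1 / 2) : ℝ) * (√(1 + |b| * ‖u‖ ^ s))⁻¹ := by
    rw [Real.sqrt_mul (abs_nonneg a), abs_mul, Real.rpow_neg (abs_nonneg a), ← Real.sqrt_eq_rpow,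
      mul_one, div_eq_mul_inv, mul_inv, mul_assoc]
    gcongr
    exact hsf u
  calc (volume.prod μ) {p : ℝ × E | |a * p.1 ^ 2 + b * f p.2| ≤ 1}
      ≤ ∫⁻ u, ENNReal.ofReal (4 * 1 / √(|a| * (1 + |b * f u|))) ∂μ :=
        volume_prod_abs_mul_sq_add_le μ (hf.const_mul b) ha one_pos
    _ ≤ ∫⁻ u, ENNReal.ofReal (4 * |a| ^ (-(1 / 2) : ℝ)) *
          ENNReal.ofReal (√(1 + |b| * ‖u‖ ^ s))⁻¹ ∂μ := lintegral_mono fun u => by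
        rw [← ENNReal.ofReal_mul (by positivity)]
        exact ENNReal.ofReal_le_ofReal (hslice u)
    _ = ENNReal.ofReal (4 * (∫ u, (√(1 + ‖u‖ ^ s))⁻¹ ∂μ) * |a| ^ (-(1 / 2) : ℝ) *
          |b| ^ (-(finrank ℝ E / s))) := by
        rw [lintegral_const_mul' _ _ ENNReal.ofReal_ne_top,
          lintegral_ofReal_inv_sqrt_one_add_mul_norm_rpow μ hs (abs_pos.2 hb),
          ← ENNReal.ofReal_mul (by positivity)]
        congr 1
        ring

end AddHaar

/-- For `k > 2`, the measure of `{(t,u) : |a t² + b u^k| ≤ 1}` is `O(|a|^{-1/2} |b|^{-1/k})`. -/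
theorem measure_abs_tt_uk_le (k : ℕ) (hk : 2 < k) :
    ∃ K : ℝ, 0 < K ∧ ∀ a b : ℝ, a ≠ 0 → b ≠ 0 →
      volume {p : ℝ × ℝ | |a * p.1 ^ 2 + b * p.2 ^ k| ≤ 1} ≤
        ENNReal.ofReal (K * |a| ^ (-(1 / 2) : ℝ) * |b| ^ (-(1 / (k : ℝ)))) := by
  obtain ⟨K, hK, h⟩ := measure_abs_tt_uk_le_general (volume : Measure ℝ) (s := k)
    (by simpa using mod_cast hk)
  exact ⟨K, hK, fun a b ha hb => by
    simpa [← Measure.volume_eq_prod] using h a b ha hb (· ^ k) (by fun_prop) fun u => by simp⟩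
end

section
/- Let b be a positive integer, C₁, C₂, C₃ ≥ 1 real numbers, and let θ : ℤ₊ → ℝ be non-negative, represented as θ(n) = c·∏_{p^ν ∥ n} A_p(ν) · ∏_{p ∤ n} A_p(0) with c ∈ ℝ and non-negative A_p : ℕ → ℝ (with the convention that an infinite product converges if the partial products of its nonzero factors converge to a nonzero limit, and equals 0 if some factor vanishes), satisfying: (i) for all primes p and all ν ≥ 1, |A_p(ν) − A_p(ν−1)| ≤ C₁ if p^ν | b and |A_p(ν) − A_p(ν−1)| ≤ C₂·p^{−ν} if p^ν ∤ b; and (ii) for all positive integers k, |c·∏_{p ∤ k} A_p(0)| ≤ C₃. Then there is a constant K depending only on C₂ such that for all t ≥ 0, ∑_{0 < n ≤ t} |(θ∗μ)(n)|·n ≤ K·τ(b)·(C₁C₂)^{ω(b)}·C₃·t·(log(t+2))^{C₂−1}. -/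
/-!
Möbius inversion of the Euler product representation is exact:
`(θ ∗ μ)(n) = c · ∏_{p ∤ n} A_p(0) · ∏_{p^ν ∥ n} (A_p(ν) - A_p(ν-1))`.
If `d` is the product of those `p^ν ∥ n` which divide `b`, it follows that
`|(θ ∗ μ)(n)| n ≤ C₃ C₁^{ω(b)} d C₂^{ω(n/d)}`. After summing over the divisors `d` of `b`, it
remains to show `∑_{m ≤ x} C^{ω(m)} ≪ x (log(x+2))^{C-1}`.

Put `L = log(x+2)` and `T = ∑_{m ≤ x} C^{ω(m)} / m`. From `log = Λ ∗ 1`, the inequality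
`ω(mq) ≤ ω(m) + 1` for prime powers `q`, and Chebyshev's bound `ψ(y) ≪ y`, one obtains
`L ∑_{m ≤ x} C^{ω(m)} ≪ x T`. Comparing `T` with `∑_m C^{ω(m)} m^{-s}` at `s = 1 + 1/L`, and its
Euler product with that of `ζ(s)^C`, gives `T ≪ ζ(s)^C ≪ L^C`.
-/

/-- The Dirichlet convolution `θ ∗ μ` of a real-valued arithmetic function with the Möbius
function. -/
noncomputable def dconv (θ : ℕ → ℝ) (n : ℕ) : ℝ :=
  ∑ d ∈ n.divisors, (ArithmeticFunction.moebius d : ℝ) * θ (n / d)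

/-- `θ` is represented by the constant `c` and the local data `A` in the sense that
`θ(n) = c · ∏_{p^ν ∥ n} A_p(ν) · ∏_{p ∤ n} A_p(0)`, the infinite product over the primes not
dividing `n` being convergent. -/
def EulerRep (θ : ℕ → ℝ) (c : ℝ) (A : ℕ → ℕ → ℝ) : Prop :=
  (∀ p ν : ℕ, p.Prime → 0 ≤ A p ν) ∧
  (∀ n : ℕ, 0 < n → Multipliable (fun p : {p : ℕ // p.Prime ∧ ¬ p ∣ n} => A p.1 0)) ∧
  (∀ n : ℕ, 0 < n →
    θ n = c * (∏ p ∈ n.primeFactors, A p (n.factorization p)) *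
      ∏' p : {p : ℕ // p.Prime ∧ ¬ p ∣ n}, A p.1 0)

/-- The local data `c, A` satisfies the smallness conditions of the set `Θ₂(b, C₁, C₂, C₃)`. -/
def SmallCond (b : ℕ) (C₁ C₂ C₃ c : ℝ) (A : ℕ → ℕ → ℝ) : Prop :=
  (∀ p ν : ℕ, p.Prime → 1 ≤ ν →
    (p ^ ν ∣ b → |A p ν - A p (ν - 1)| ≤ C₁) ∧
    (¬ p ^ ν ∣ b → |A p ν - A p (ν - 1)| ≤ C₂ / (p : ℝ) ^ ν)) ∧
  (∀ k : ℕ, 0 < k → |c * ∏' p : {p : ℕ // p.Prime ∧ ¬ p ∣ k}, A p.1 0| ≤ C₃)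

open Finset
open scoped ArithmeticFunction.Moebius ArithmeticFunction.vonMangoldt

/-! ### Mean values of arithmetic functions -/

section MeanValue

variable {f : ArithmeticFunction ℝ} {C : ℝ}

lemma mul_log_le_mul_vonMangoldt (hf : ∀ m q, IsPrimePow q → f (m * q) ≤ C * f m) (n : ℕ) :
    f n * Real.log n ≤ C * (f * Λ) n := by
  rw [← ArithmeticFunction.vonMangoldt_sum,
    ← Nat.sum_divisorsAntidiagonal' (f := fun _ q => (Λ q : ℝ)), ArithmeticFunction.mul_apply,
    mul_sum, mul_sum]
  refine sum_le_sum fun ⟨m, q⟩ hmq => ?_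
  obtain rfl : m * q = n := (Nat.mem_divisorsAntidiagonal.1 hmq).1
  by_cases hq : IsPrimePow q
  · rw [← mul_assoc]
    exact mul_le_mul_of_nonneg_right (hf m q hq) ArithmeticFunction.vonMangoldt_nonneg
  · simp [ArithmeticFunction.vonMangoldt_eq_zero_iff.2 hq]

lemma sum_mul_vonMangoldt_le (hf : ∀ n, 0 ≤ f n) {x : ℝ} (hx : 0 ≤ x) :
    ∑ n ∈ Ioc 0 ⌊x⌋₊, (f * Λ) n ≤ (Real.log 4 + 4) * x * ∑ n ∈ Ioc 0 ⌊x⌋₊, f n / n := by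
  rw [ArithmeticFunction.sum_Ioc_mul_eq_sum_sum, mul_sum]
  refine sum_le_sum fun n _ => ?_
  rw [← Nat.floor_div_natCast]
  calc f n * Chebyshev.psi (x / n)
      ≤ f n * ((Real.log 4 + 4) * (x / n)) :=
        mul_le_mul_of_nonneg_left (Chebyshev.psi_le_const_mul_self (by positivity)) (hf n)
    _ = (Real.log 4 + 4) * x * (f n / n) := by ring

lemma log_add_two_le {x y : ℝ} (hy : 1 ≤ y) (hyx : y ≤ x) :
    Real.log (x + 2) ≤ Real.log y + 3 * x / y := by
  have hy0 : 0 < y := by linarith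
  calc Real.log (x + 2) = Real.log y + Real.log ((x + 2) / y) := by
        rw [Real.log_div (by linarith) hy0.ne']
        ring
    _ ≤ Real.log y + (x + 2) / y := by
        gcongr
        exact Real.log_le_self (div_nonneg (by linarith) hy0.le)
    _ ≤ Real.log y + 3 * x / y := by
        gcongr
        linarith

lemma sum_mul_log_add_two_le (hC : 0 ≤ C) (hf : ∀ n, 0 ≤ f n)
    (hfC : ∀ m q, IsPrimePow q → f (m * q) ≤ C * f m) {x : ℝ} (hx : 0 ≤ x) :
    (∑ n ∈ Ioc 0 ⌊x⌋₊, f n) * Real.log (x + 2) ≤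
      (C * (Real.log 4 + 4) + 3) * x * ∑ n ∈ Ioc 0 ⌊x⌋₊, f n / n := by
  calc (∑ n ∈ Ioc 0 ⌊x⌋₊, f n) * Real.log (x + 2)
      ≤ ∑ n ∈ Ioc 0 ⌊x⌋₊, (C * (f * Λ) n + 3 * x * (f n / n)) := by
        rw [sum_mul]
        refine sum_le_sum fun n hn => ?_
        rw [mem_Ioc, Nat.le_floor_iff hx] at hn
        calc f n * Real.log (x + 2) ≤ f n * (Real.log n + 3 * x / n) :=
              mul_le_mul_of_nonneg_left (log_add_two_le (by exact_mod_cast hn.1) hn.2) (hf n)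
          _ = f n * Real.log n + 3 * x * (f n / n) := by ring
          _ ≤ C * (f * Λ) n + 3 * x * (f n / n) := by
              gcongr ?_ + _
              exact mul_log_le_mul_vonMangoldt hfC n
    _ = C * ∑ n ∈ Ioc 0 ⌊x⌋₊, (f * Λ) n + 3 * x * ∑ n ∈ Ioc 0 ⌊x⌋₊, f n / n := by
        rw [sum_add_distrib, mul_sum, mul_sum]
    _ ≤ C * ((Real.log 4 + 4) * x * ∑ n ∈ Ioc 0 ⌊x⌋₊, f n / n) +
          3 * x * ∑ n ∈ Ioc 0 ⌊x⌋₊, f n / n := by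
        gcongr
        exact sum_mul_vonMangoldt_le hf hx
    _ = (C * (Real.log 4 + 4) + 3) * x * ∑ n ∈ Ioc 0 ⌊x⌋₊, f n / n := by ring

lemma inv_le_exp_one_mul_rpow {y L : ℝ} (hy : 0 < y) (hL : 0 < L) (hyL : Real.log y ≤ L) :
    y⁻¹ ≤ Real.exp 1 * y ^ (-(1 + 1 / L)) := by
  have h : 1 ≤ Real.exp 1 * y ^ (-(1 / L)) := by
    rw [Real.rpow_def_of_pos hy, ← Real.exp_add, Real.one_le_exp_iff]
    have : Real.log y / L ≤ 1 := (div_le_one hL).2 hyL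
    linear_combination this
  calc y⁻¹ ≤ Real.exp 1 * y ^ (-(1 / L)) * y⁻¹ := le_mul_of_one_le_left (by positivity) h
    _ = Real.exp 1 * y ^ (-(1 + 1 / L)) := by
        rw [show -(1 + 1 / L) = -(1 / L) - 1 by ring, Real.rpow_sub_one hy.ne', mul_assoc,
          ← div_eq_mul_inv]

end MeanValue

/-! ### Truncated Euler products -/

lemma sum_Ioc_le_prod_primesBelow_tsum {f : ℕ → ℝ} (hf : ∀ n, 0 ≤ f n) (hf₁ : f 1 = 1)
    (hmul : ∀ {m n : ℕ}, m.Coprime n → f (m * n) = f m * f n)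
    (hsum : ∀ {p : ℕ}, p.Prime → Summable fun k => f (p ^ k)) (N : ℕ) :
    ∑ n ∈ Ioc 0 N, f n ≤ ∏ p ∈ (N + 1).primesBelow, ∑' k, f (p ^ k) := by
  have hE := (EulerProduct.summable_and_hasSum_smoothNumbers_prod_primesBelow_tsum hf₁ hmul
    (fun hp => by simpa only [Real.norm_of_nonneg (hf _)] using hsum hp) (N + 1)).2
  have hmem : ∀ n ∈ Ioc 0 N, n ∈ (N + 1).smoothNumbers := fun n hn =>
    Nat.mem_smoothNumbers_of_lt (mem_Ioc.1 hn).1 (Nat.lt_succ_of_le (mem_Ioc.1 hn).2)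
  rw [← hE.tsum_eq, ← sum_subtype_of_mem f hmem]
  exact hE.summable.sum_le_tsum _ fun n _ => hf n

lemma tsum_rpow_neg_le {s : ℝ} (hs : 1 < s) :
    ∑' n : ℕ, (n : ℝ) ^ (-s) ≤ 1 + 1 / (s - 1) := by
  have hshift : ∑' n : ℕ, ((n + 1 : ℕ) : ℝ) ^ (-s) = ∑' n : ℕ, 1 / ((n : ℝ) + 1) ^ s :=
    tsum_congr fun n => by
      rw [Real.rpow_neg (by positivity), one_div, Nat.cast_add_one]
  have hT : 0 ≤ s * ZetaAsymptotics.termTSum s :=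
    mul_nonneg (by linarith) (tsum_nonneg fun n => ZetaAsymptotics.term_nonneg _ _)
  rw [(Real.summable_nat_rpow.2 (neg_lt_neg hs)).tsum_eq_zero_add, hshift, Nat.cast_zero,
    Real.zero_rpow (by linarith)]
  linarith [ZetaAsymptotics.zeta_limit_aux1 hs]

lemma natCast_rpow_neg_lt_one {p : ℕ} (hp : p.Prime) {s : ℝ} (hs : 0 < s) :
    (p : ℝ) ^ (-s) < 1 :=
  Real.rpow_lt_one_of_one_lt_of_neg (by exact_mod_cast hp.one_lt) (neg_neg_of_pos hs)

lemma prod_primesBelow_inv_one_sub_rpow_le {s : ℝ} (hs : 1 < s) (N : ℕ) :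
    ∏ p ∈ N.primesBelow, (1 - (p : ℝ) ^ (-s))⁻¹ ≤ 1 + 1 / (s - 1) := by
  let f : ℕ →* ℝ :=
    { toFun := fun n => (n : ℝ) ^ (-s)
      map_one' := by simp
      map_mul' := fun m n => by
        rw [Nat.cast_mul, Real.mul_rpow (Nat.cast_nonneg _) (Nat.cast_nonneg _)] }
  have hsum : Summable f := Real.summable_nat_rpow.2 (neg_lt_neg hs)
  calc ∏ p ∈ N.primesBelow, (1 - f p)⁻¹ = ∑' n : N.smoothNumbers, f n :=
        EulerProduct.prod_primesBelow_geometric_eq_tsum_smoothNumbers hsum N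
    _ ≤ ∑' n, f n := hsum.tsum_subtype_le f _ fun n => Real.rpow_nonneg n.cast_nonneg _
    _ ≤ 1 + 1 / (s - 1) := tsum_rpow_neg_le hs

/-! ### The mean value of `C ^ ω(n)` -/

/-- The multiplicative function `n ↦ C ^ ω(n)`, with value `0` at `0`. -/
noncomputable def powOmega (C : ℝ) : ArithmeticFunction ℝ :=
  ArithmeticFunction.prodPrimeFactors fun _ => C

section PowOmega

variable {C : ℝ}

lemma powOmega_apply (C : ℝ) {n : ℕ} (hn : n ≠ 0) : powOmega C n = C ^ #n.primeFactors := by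
  rw [powOmega, ArithmeticFunction.prodPrimeFactors_apply hn, prod_const]

lemma isMultiplicative_powOmega (C : ℝ) : (powOmega C).IsMultiplicative :=
  .prodPrimeFactors _

lemma powOmega_nonneg (hC : 0 ≤ C) (n : ℕ) : 0 ≤ powOmega C n := by
  rcases eq_or_ne n 0 with rfl | hn
  · simp
  · rw [powOmega_apply C hn]
    positivity

lemma powOmega_prime_pow (C : ℝ) {p k : ℕ} (hp : p.Prime) (hk : k ≠ 0) :
    powOmega C (p ^ k) = C := by
  rw [powOmega_apply C (pow_ne_zero k hp.ne_zero), Nat.primeFactors_prime_pow hk hp,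
    card_singleton, pow_one]

lemma powOmega_mul_primePow_le (hC : 1 ≤ C) (m : ℕ) {q : ℕ} (hq : IsPrimePow q) :
    powOmega C (m * q) ≤ C * powOmega C m := by
  rcases eq_or_ne m 0 with rfl | hm
  · simp
  rw [powOmega_apply C (mul_ne_zero hm hq.ne_zero), powOmega_apply C hm, ← pow_succ',
    Nat.primeFactors_mul hm hq.ne_zero]
  refine pow_le_pow_right₀ hC ((card_union_le _ _).trans_eq ?_)
  rw [(isPrimePow_iff_card_primeFactors_eq_one).1 hq]

lemma hasSum_powOmega_prime_pow_mul_rpow (C : ℝ) {s : ℝ} (hs : 0 < s) {p : ℕ} (hp : p.Prime) :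
    HasSum (fun k => powOmega C (p ^ k) * ((p ^ k : ℕ) : ℝ) ^ (-s))
      (1 + C * ((p : ℝ) ^ (-s) * (1 - (p : ℝ) ^ (-s))⁻¹)) := by
  have hgeom := ((hasSum_geometric_of_lt_one (by positivity)
    (natCast_rpow_neg_lt_one hp hs)).mul_left ((p : ℝ) ^ (-s))).mul_left C
  have hterm : ∀ k, powOmega C (p ^ (k + 1)) * ((p ^ (k + 1) : ℕ) : ℝ) ^ (-s) =
      C * ((p : ℝ) ^ (-s) * ((p : ℝ) ^ (-s)) ^ k) := fun k => by
    rw [powOmega_prime_pow C hp k.succ_ne_zero, ← pow_succ', Nat.cast_pow,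
      Real.rpow_pow_comm p.cast_nonneg]
  rw [← hasSum_nat_add_iff' 1, funext hterm]
  simpa [(isMultiplicative_powOmega C).map_one] using hgeom

/-- Bernoulli's inequality for the local factors: with `y = p^{-s}`, the left side is
`∑_k C^{ω(p^k)} p^{-ks}` and the right side is the local factor of `ζ(s)^C`. -/
lemma one_add_mul_le_inv_one_sub_rpow (hC : 1 ≤ C) {y : ℝ} (hy0 : 0 ≤ y) (hy : y < 1) :
    1 + C * (y * (1 - y)⁻¹) ≤ (1 - y)⁻¹ ^ C := by
  have hy' : 0 < 1 - y := by linarith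
  have h : (1 - y)⁻¹ = 1 + y * (1 - y)⁻¹ := by
    field_simp
    ring
  conv_rhs => rw [h]
  have : 0 ≤ y * (1 - y)⁻¹ := by positivity
  exact one_add_mul_self_le_rpow_one_add (by linarith) hC

lemma sum_powOmega_mul_rpow_le (hC : 1 ≤ C) {s : ℝ} (hs : 1 < s) (N : ℕ) :
    ∑ n ∈ Ioc 0 N, powOmega C n * (n : ℝ) ^ (-s) ≤ (1 + 1 / (s - 1)) ^ C := by
  have hs0 : 0 < s := by linarith
  have hpos : ∀ p ∈ (N + 1).primesBelow, 0 ≤ (1 - (p : ℝ) ^ (-s))⁻¹ := fun p hp =>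
    inv_nonneg.2 (sub_nonneg.2 (natCast_rpow_neg_lt_one (Nat.prime_of_mem_primesBelow hp) hs0).le)
  have hnonneg : ∀ n, 0 ≤ powOmega C n * (n : ℝ) ^ (-s) := fun n =>
    mul_nonneg (powOmega_nonneg (by linarith) n) (by positivity)
  have hmul : ∀ {m n : ℕ}, m.Coprime n → powOmega C (m * n) * ((m * n : ℕ) : ℝ) ^ (-s) =
      powOmega C m * (m : ℝ) ^ (-s) * (powOmega C n * (n : ℝ) ^ (-s)) := fun {m n} h => by
    rw [(isMultiplicative_powOmega C).map_mul_of_coprime h, Nat.cast_mul,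
      Real.mul_rpow m.cast_nonneg n.cast_nonneg, mul_mul_mul_comm]
  calc ∑ n ∈ Ioc 0 N, powOmega C n * (n : ℝ) ^ (-s)
      ≤ ∏ p ∈ (N + 1).primesBelow, ∑' k, powOmega C (p ^ k) * ((p ^ k : ℕ) : ℝ) ^ (-s) :=
        sum_Ioc_le_prod_primesBelow_tsum hnonneg
          (by simp [(isMultiplicative_powOmega C).map_one]) hmul
          (fun hp => (hasSum_powOmega_prime_pow_mul_rpow C hs0 hp).summable) N
    _ ≤ ∏ p ∈ (N + 1).primesBelow, (1 - (p : ℝ) ^ (-s))⁻¹ ^ C := by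
        refine prod_le_prod (fun p _ => tsum_nonneg fun k => hnonneg _) fun p hp => ?_
        have hp := Nat.prime_of_mem_primesBelow hp
        rw [(hasSum_powOmega_prime_pow_mul_rpow C hs0 hp).tsum_eq]
        exact one_add_mul_le_inv_one_sub_rpow hC (by positivity) (natCast_rpow_neg_lt_one hp hs0)
    _ = (∏ p ∈ (N + 1).primesBelow, (1 - (p : ℝ) ^ (-s))⁻¹) ^ C :=
        Real.finsetProd_rpow _ _ hpos _
    _ ≤ (1 + 1 / (s - 1)) ^ C :=
        Real.rpow_le_rpow (prod_nonneg hpos) (prod_primesBelow_inv_one_sub_rpow_le hs _)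
          (by linarith)

/-- Rankin's trick with the exponent `1 + 1 / L`. -/
lemma sum_powOmega_div_le (hC : 1 ≤ C) {L : ℝ} (hL : 1 ≤ L) {N : ℕ} (hN : Real.log N ≤ L) :
    ∑ n ∈ Ioc 0 N, powOmega C n / n ≤ Real.exp 1 * 2 ^ C * L ^ C := by
  have hL0 : 0 < L := by linarith
  calc ∑ n ∈ Ioc 0 N, powOmega C n / n
      ≤ ∑ n ∈ Ioc 0 N, Real.exp 1 * (powOmega C n * (n : ℝ) ^ (-(1 + 1 / L))) := by
        refine sum_le_sum fun n hn => ?_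
        rw [mem_Ioc] at hn
        have hn0 : (0 : ℝ) < n := by exact_mod_cast hn.1
        have hnL : Real.log n ≤ L :=
          (Real.log_le_log hn0 (by exact_mod_cast hn.2)).trans hN
        rw [div_eq_mul_inv, mul_left_comm]
        exact mul_le_mul_of_nonneg_left (inv_le_exp_one_mul_rpow hn0 hL0 hnL)
          (powOmega_nonneg (by linarith) n)
    _ ≤ Real.exp 1 * (1 + 1 / (1 + 1 / L - 1)) ^ C := by
        rw [← mul_sum]
        gcongr
        exact sum_powOmega_mul_rpow_le hC (lt_add_of_pos_right 1 (by positivity)) N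
    _ ≤ Real.exp 1 * (2 * L) ^ C := by
        rw [add_sub_cancel_left, one_div_one_div]
        gcongr
        linarith
    _ = Real.exp 1 * 2 ^ C * L ^ C := by
        rw [Real.mul_rpow two_pos.le hL0.le, mul_assoc]

/-- The implied constant in the mean value estimate for `C ^ ω(n)`. -/
noncomputable def powOmegaConst (C : ℝ) : ℝ :=
  (C * (Real.log 4 + 4) + 3) * Real.exp 1 * 2 ^ C

lemma powOmegaConst_pos (hC : 0 ≤ C) : 0 < powOmegaConst C := by
  unfold powOmegaConst
  positivity

lemma sum_powOmega_le (hC : 1 ≤ C) {x : ℝ} (hx : 0 ≤ x) :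
    ∑ n ∈ Ioc 0 ⌊x⌋₊, powOmega C n ≤ powOmegaConst C * x * Real.log (x + 2) ^ (C - 1) := by
  have hC0 : 0 ≤ C := by linarith
  rcases lt_or_ge x 1 with hx1 | hx1
  · rw [Nat.floor_eq_zero.2 hx1, Ioc_self, sum_empty]
    have := powOmegaConst_pos hC0
    have := Real.log_nonneg (by linarith : 1 ≤ x + 2)
    positivity
  set L := Real.log (x + 2) with hL
  have hL1 : 1 ≤ L := by
    rw [hL, Real.le_log_iff_exp_le (by linarith)]
    linarith [Real.exp_one_lt_d9]
  have hfloor : Real.log ⌊x⌋₊ ≤ L :=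
    Real.log_le_log (by exact_mod_cast Nat.floor_pos.2 hx1) (by linarith [Nat.floor_le hx])
  refine le_of_mul_le_mul_right ?_ (by linarith : 0 < L)
  calc (∑ n ∈ Ioc 0 ⌊x⌋₊, powOmega C n) * L
      ≤ (C * (Real.log 4 + 4) + 3) * x * ∑ n ∈ Ioc 0 ⌊x⌋₊, powOmega C n / n :=
        sum_mul_log_add_two_le hC0 (powOmega_nonneg hC0)
          (fun m _ => powOmega_mul_primePow_le hC m) hx
    _ ≤ (C * (Real.log 4 + 4) + 3) * x * (Real.exp 1 * 2 ^ C * L ^ C) := by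
        gcongr
        exact sum_powOmega_div_le hC hL1 hfloor
    _ = powOmegaConst C * x * L ^ (C - 1) * L := by
        rw [powOmegaConst, mul_assoc _ (L ^ (C - 1)), ← Real.rpow_add_one (by linarith),
          sub_add_cancel]
        ring

end PowOmega

/-! ### Möbius inversion of Euler products -/

section Moebius

variable {n : ℕ}

lemma moebius_prod_of_subset_primeFactors {s : Finset ℕ} (hs : s ⊆ n.primeFactors) :
    μ (∏ p ∈ s, p) = (-1) ^ #s := by
  rw [ArithmeticFunction.isMultiplicative_moebius.map_prod_of_subset_primeFactors n s hs,
    prod_congr rfl fun p hp =>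
      ArithmeticFunction.moebius_apply_prime (Nat.prime_of_mem_primeFactors (hs hp)),
    prod_const]

lemma factorization_div_prod_of_subset_primeFactors {s : Finset ℕ} (hs : s ⊆ n.primeFactors)
    (p : ℕ) : (n / ∏ q ∈ s, q).factorization p = n.factorization p - if p ∈ s then 1 else 0 := by
  have hprime : ∀ q ∈ s, q.Prime := fun q hq => Nat.prime_of_mem_primeFactors (hs hq)
  have hdvd : ∏ q ∈ s, q ∣ n :=
    (prod_dvd_prod_of_subset _ _ _ hs).trans (Nat.prod_primeFactors_dvd n)
  rw [Nat.factorization_div hdvd, Finsupp.tsub_apply,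
    Nat.factorization_prod_apply fun q hq => (hprime q hq).ne_zero,
    sum_congr rfl fun q hq => by rw [(hprime q hq).factorization, Finsupp.single_apply],
    sum_ite_eq']

lemma sum_divisors_moebius_mul {R : Type*} [Ring R] (hn : n ≠ 0) (g : ℕ → R) :
    ∑ d ∈ n.divisors, (μ d : R) * g d =
      ∑ s ∈ n.primeFactors.powerset, (-1) ^ #s * g (∏ p ∈ s, p) := by
  have hfactors : (UniqueFactorizationMonoid.normalizedFactors n).toFinset = n.primeFactors := by
    rw [Nat.factors_eq]
    rfl
  have hsquarefree : ∑ d ∈ n.divisors, (μ d : R) * g d =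
      ∑ d ∈ n.divisors with Squarefree d, (μ d : R) * g d := by
    refine (sum_filter_of_ne fun d _ hd => ?_).symm
    contrapose! hd
    rw [ArithmeticFunction.moebius_eq_zero_of_not_squarefree hd, Int.cast_zero, zero_mul]
  rw [hsquarefree, Nat.sum_divisors_filter_squarefree hn, hfactors]
  refine sum_congr rfl fun s hs => ?_
  rw [prod_val, Function.id_def, moebius_prod_of_subset_primeFactors (mem_powerset.1 hs)]
  norm_num

lemma sum_moebius_mul_prod_factorization {R : Type*} [CommRing R] (hn : n ≠ 0)
    (B : ℕ → ℕ → R) :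
    ∑ d ∈ n.divisors, (μ d : R) * ∏ p ∈ n.primeFactors, B p ((n / d).factorization p) =
      ∏ p ∈ n.primeFactors, (B p (n.factorization p) - B p (n.factorization p - 1)) := by
  rw [sum_divisors_moebius_mul hn fun d => ∏ p ∈ n.primeFactors, B p ((n / d).factorization p),
    prod_sub]
  refine sum_congr rfl fun s hs => ?_
  rw [mem_powerset] at hs
  have hout : ∏ p ∈ n.primeFactors \ s, B p ((n / ∏ q ∈ s, q).factorization p) =
      ∏ p ∈ n.primeFactors \ s, B p (n.factorization p) :=
    prod_congr rfl fun p hp => by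
      rw [factorization_div_prod_of_subset_primeFactors hs, if_neg (mem_sdiff.1 hp).2,
        Nat.sub_zero]
  have hin : ∏ p ∈ s, B p ((n / ∏ q ∈ s, q).factorization p) =
      ∏ p ∈ s, B p (n.factorization p - 1) :=
    prod_congr rfl fun p hp => by
      rw [factorization_div_prod_of_subset_primeFactors hs, if_pos hp]
  rw [← prod_sdiff hs, hout, hin]
  ring

end Moebius

lemma tprod_not_dvd_of_dvd {M : Type*} [CommMonoid M] [TopologicalSpace M] [ContinuousMul M]
    [T2Space M] {f : ℕ → M} {m n : ℕ} (hn : n ≠ 0) (hmn : m ∣ n)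
    (hf : Multipliable fun p : {p : ℕ // p.Prime ∧ ¬ p ∣ n} => f p) :
    ∏' p : {p : ℕ // p.Prime ∧ ¬ p ∣ m}, f p =
      (∏ p ∈ n.primeFactors \ m.primeFactors, f p) *
        ∏' p : {p : ℕ // p.Prime ∧ ¬ p ∣ n}, f p := by
  have hm : m ≠ 0 := ne_zero_of_dvd_ne_zero hn hmn
  have hunion : {p : ℕ | p.Prime ∧ ¬ p ∣ m} =
      ↑(n.primeFactors \ m.primeFactors) ∪ {p : ℕ | p.Prime ∧ ¬ p ∣ n} := by
    ext p
    have := fun h : p ∣ m => h.trans hmn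
    simp only [Set.mem_ofPred_eq, Set.mem_union, mem_coe, mem_sdiff, Nat.mem_primeFactors]
    tauto
  have hdisj : Disjoint (↑(n.primeFactors \ m.primeFactors) : Set ℕ)
      {p : ℕ | p.Prime ∧ ¬ p ∣ n} :=
    Set.disjoint_left.2 fun p hp hp' =>
      hp'.2 (Nat.dvd_of_mem_primeFactors (mem_sdiff.1 (mem_coe.1 hp)).1)
  have hprod := (Finset.hasProd (n.primeFactors \ m.primeFactors) f).mul_disjoint hdisj hf.hasProd
  rw [← hunion] at hprod
  exact hprod.tprod_eq

/-- The Dirichlet convolution `θ ∗ μ` for `θ` with values in a ring; for real `θ` it is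
`dconv θ`. -/
def moebiusConv {R : Type*} [Ring R] (θ : ℕ → R) (n : ℕ) : R :=
  ∑ d ∈ n.divisors, (μ d : R) * θ (n / d)

/-- The representation `θ(n) = c · ∏_{p^ν ∥ n} A_p(ν) · ∏_{p ∤ n} A_p(0)` of `EulerRep`, for
values in a topological monoid and without sign conditions. -/
structure HasEulerFactors {M : Type*} [CommMonoid M] [TopologicalSpace M]
    (θ : ℕ → M) (c : M) (A : ℕ → ℕ → M) : Prop where
  multipliable : ∀ n : ℕ, 0 < n →
    Multipliable fun p : {p : ℕ // p.Prime ∧ ¬ p ∣ n} => A p 0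
  eq_mul_tprod : ∀ n : ℕ, 0 < n → θ n = c * (∏ p ∈ n.primeFactors, A p (n.factorization p)) *
    ∏' p : {p : ℕ // p.Prime ∧ ¬ p ∣ n}, A p 0

namespace HasEulerFactors

lemma eq_mul_prod_of_dvd {M : Type*} [CommMonoid M] [TopologicalSpace M] [ContinuousMul M]
    [T2Space M] {θ : ℕ → M} {c : M} {A : ℕ → ℕ → M} (h : HasEulerFactors θ c A)
    {m n : ℕ} (hn : n ≠ 0) (hmn : m ∣ n) :
    θ m = (c * ∏' p : {p : ℕ // p.Prime ∧ ¬ p ∣ n}, A p 0) *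
      ∏ p ∈ n.primeFactors, A p (m.factorization p) := by
  have hout : ∏ p ∈ n.primeFactors \ m.primeFactors, A p (m.factorization p) =
      ∏ p ∈ n.primeFactors \ m.primeFactors, A p 0 :=
    prod_congr rfl fun p hp => by rw [Finsupp.notMem_support_iff.1 (mem_sdiff.1 hp).2]
  rw [h.eq_mul_tprod m (Nat.pos_of_dvd_of_pos hmn hn.pos),
    tprod_not_dvd_of_dvd (f := (A · 0)) hn hmn (h.multipliable n hn.pos),
    ← prod_sdiff (Nat.primeFactors_mono hmn hn), hout]
  ac_rfl

lemma moebiusConv_eq {R : Type*} [CommRing R] [TopologicalSpace R] [ContinuousMul R] [T2Space R]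
    {θ : ℕ → R} {c : R} {A : ℕ → ℕ → R} (h : HasEulerFactors θ c A) {n : ℕ} (hn : n ≠ 0) :
    moebiusConv θ n = (c * ∏' p : {p : ℕ // p.Prime ∧ ¬ p ∣ n}, A p 0) *
      ∏ p ∈ n.primeFactors, (A p (n.factorization p) - A p (n.factorization p - 1)) := by
  rw [← sum_moebius_mul_prod_factorization hn, moebiusConv, mul_sum]
  refine sum_congr rfl fun d hd => ?_
  rw [h.eq_mul_prod_of_dvd hn (Nat.div_dvd_of_dvd (Nat.dvd_of_mem_divisors hd)), mul_left_comm]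

end HasEulerFactors

/-! ### The local weights -/

/-- The majorant of `|(θ ∗ μ)(n)| n / C₃`, a product over `p^ν ∥ n` of the bounds for
`|A_p(ν) - A_p(ν-1)| p^ν`. -/
noncomputable def localWeight (b : ℕ) (C₁ C₂ : ℝ) (n : ℕ) : ℝ :=
  ∏ p ∈ n.primeFactors, if p ^ n.factorization p ∣ b then C₁ * p ^ n.factorization p else C₂

/-- The product of those `p^ν ∥ n` which divide `b`. -/
def unitaryPart (b n : ℕ) : ℕ :=
  ∏ p ∈ n.primeFactors with p ^ n.factorization p ∣ b, p ^ n.factorization p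

/-- The function with value `d` at the divisors `d` of `b`, and `0` elsewhere. -/
noncomputable def idOnDivisors (b : ℕ) : ArithmeticFunction ℝ :=
  ⟨fun d => if d ∣ b then d else 0, by simp⟩

section Weights

variable {b n : ℕ} {C₁ C₂ : ℝ}

lemma norm_moebiusConv_mul_le {R : Type*} [NormedCommRing R] [NormOneClass R]
    {C₃ : ℝ} {θ : ℕ → R} {c : R} {A : ℕ → ℕ → R} (hE : HasEulerFactors θ c A)
    (hdvd : ∀ p ν : ℕ, p.Prime → 1 ≤ ν → p ^ ν ∣ b → ‖A p ν - A p (ν - 1)‖ ≤ C₁)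
    (hndvd : ∀ p ν : ℕ, p.Prime → 1 ≤ ν → ¬ p ^ ν ∣ b →
      ‖A p ν - A p (ν - 1)‖ ≤ C₂ / (p : ℝ) ^ ν)
    (hn : n ≠ 0) (hC₃ : ‖c * ∏' p : {p : ℕ // p.Prime ∧ ¬ p ∣ n}, A p 0‖ ≤ C₃) :
    ‖moebiusConv θ n‖ * n ≤ C₃ * localWeight b C₁ C₂ n := by
  set D := fun p => A p (n.factorization p) - A p (n.factorization p - 1)
  have hlocal : ∀ p ∈ n.primeFactors, ‖D p‖ * (p : ℝ) ^ n.factorization p ≤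
      if p ^ n.factorization p ∣ b then C₁ * p ^ n.factorization p else C₂ := by
    intro p hp
    have hprime := Nat.prime_of_mem_primeFactors hp
    have hν := hprime.factorization_pos_of_dvd hn (Nat.dvd_of_mem_primeFactors hp)
    have hpow : (0 : ℝ) < (p : ℝ) ^ n.factorization p :=
      pow_pos (by exact_mod_cast hprime.pos) _
    split_ifs with hb
    · exact mul_le_mul_of_nonneg_right (hdvd p _ hprime hν hb) hpow.le
    · exact (le_div_iff₀ hpow).1 (hndvd p _ hprime hν hb)
  have hcast : (n : ℝ) = ∏ p ∈ n.primeFactors, (p : ℝ) ^ n.factorization p := by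
    exact_mod_cast (Nat.prod_factorization_pow_eq_self hn).symm
  calc ‖moebiusConv θ n‖ * n
      ≤ C₃ * (∏ p ∈ n.primeFactors, ‖D p‖) * n := by
        rw [hE.moebiusConv_eq hn]
        gcongr
        exact norm_mul_le_of_le hC₃ (norm_prod_le _ _)
    _ = C₃ * ∏ p ∈ n.primeFactors, ‖D p‖ * (p : ℝ) ^ n.factorization p := by
        rw [prod_mul_distrib, ← hcast, mul_assoc]
    _ ≤ C₃ * localWeight b C₁ C₂ n :=
        mul_le_mul_of_nonneg_left (prod_le_prod (fun p _ => by positivity) hlocal)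
          ((norm_nonneg _).trans hC₃)

lemma unitaryPart_dvd (b n : ℕ) : unitaryPart b n ∣ b := by
  refine prod_dvd_of_isRelPrime (fun p hp q hq hpq => ?_) fun p hp => (mem_filter.1 hp).2
  exact Nat.coprime_iff_isRelPrime.1 (Nat.coprime_pow_primes _ _
    (Nat.prime_of_mem_primeFactors (mem_filter.1 hp).1)
    (Nat.prime_of_mem_primeFactors (mem_filter.1 hq).1) hpq)

lemma unitaryPart_mul_prod (b : ℕ) (hn : n ≠ 0) :
    unitaryPart b n *
      ∏ p ∈ n.primeFactors with ¬ p ^ n.factorization p ∣ b, p ^ n.factorization p = n := by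
  rw [unitaryPart, prod_filter_mul_prod_filter_not]
  exact Nat.prod_factorization_pow_eq_self hn

lemma filter_primeFactors_subset {k : ℕ} (hk : k ≠ 0) {P : ℕ → Prop} [DecidablePred P]
    (h : ∀ p ∈ n.primeFactors, P p → p ^ n.factorization p ∣ k) :
    {p ∈ n.primeFactors | P p} ⊆ k.primeFactors := by
  intro p hp
  obtain ⟨hpn, hP⟩ := mem_filter.1 hp
  exact Nat.mem_primeFactors.2 ⟨Nat.prime_of_mem_primeFactors hpn,
    (dvd_pow_self p (Finsupp.mem_support_iff.1 hpn)).trans (h p hpn hP), hk⟩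

lemma localWeight_le (hb : b ≠ 0) (hC₁ : 1 ≤ C₁) (hC₂ : 1 ≤ C₂) (hn : n ≠ 0) :
    localWeight b C₁ C₂ n ≤ C₁ ^ #b.primeFactors * (idOnDivisors b * powOmega C₂) n := by
  set d := unitaryPart b n
  set m := ∏ p ∈ n.primeFactors with ¬ p ^ n.factorization p ∣ b, p ^ n.factorization p
  have hdm : d * m = n := unitaryPart_mul_prod b hn
  have hm : m ≠ 0 := right_ne_zero_of_mul (hdm.trans_ne hn)
  have hpowOmega := powOmega_nonneg (zero_le_one.trans hC₂)
  have hid : ∀ e, 0 ≤ idOnDivisors b e := fun e => by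
    simp only [idOnDivisors, ArithmeticFunction.coe_mk]
    positivity
  calc localWeight b C₁ C₂ n
      = C₁ ^ #{p ∈ n.primeFactors | p ^ n.factorization p ∣ b} * d *
          C₂ ^ #{p ∈ n.primeFactors | ¬ p ^ n.factorization p ∣ b} := by
        rw [localWeight, prod_ite, prod_mul_distrib, prod_const, prod_const]
        simp only [d, unitaryPart, Nat.cast_prod, Nat.cast_pow]
    _ ≤ C₁ ^ #b.primeFactors * d * C₂ ^ #m.primeFactors := by
        gcongr
        · exact filter_primeFactors_subset hb fun p _ hp => hp
        · exact filter_primeFactors_subset hm fun p hpn hp =>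
            dvd_prod_of_mem (fun p => p ^ n.factorization p) (mem_filter.2 ⟨hpn, hp⟩)
    _ = C₁ ^ #b.primeFactors * (idOnDivisors b d * powOmega C₂ m) := by
        rw [powOmega_apply C₂ hm, idOnDivisors, ArithmeticFunction.coe_mk,
          if_pos (unitaryPart_dvd b n), mul_assoc]
    _ ≤ C₁ ^ #b.primeFactors * (idOnDivisors b * powOmega C₂) n := by
        rw [ArithmeticFunction.mul_apply]
        gcongr
        exact single_le_sum (f := fun x : ℕ × ℕ => idOnDivisors b x.1 * powOmega C₂ x.2)
          (fun x _ => mul_nonneg (hid x.1) (hpowOmega x.2))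
          (Nat.mem_divisorsAntidiagonal (x := (d, m)).2 ⟨hdm, hn⟩)

lemma mul_sum_powOmega_div_le {C : ℝ} (hC : 1 ≤ C) {t : ℝ} (ht : 0 ≤ t) {d : ℕ} (hd : 0 < d) :
    d * ∑ m ∈ Ioc 0 (⌊t⌋₊ / d), powOmega C m ≤
      powOmegaConst C * t * Real.log (t + 2) ^ (C - 1) := by
  have hd1 : (1 : ℝ) ≤ d := by exact_mod_cast hd
  have hK : 0 < powOmegaConst C := powOmegaConst_pos (zero_le_one.trans hC)
  have htd : 0 ≤ t / d := by positivity
  rw [← Nat.floor_div_natCast]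
  calc d * ∑ m ∈ Ioc 0 ⌊t / d⌋₊, powOmega C m
      ≤ d * (powOmegaConst C * (t / d) * Real.log (t / d + 2) ^ (C - 1)) := by
        gcongr
        exact sum_powOmega_le hC htd
    _ = powOmegaConst C * t * Real.log (t / d + 2) ^ (C - 1) := by field_simp
    _ ≤ powOmegaConst C * t * Real.log (t + 2) ^ (C - 1) := by
        have : 0 ≤ Real.log (t / d + 2) := Real.log_nonneg (by linarith)
        gcongr
        exact div_le_self ht hd1

lemma sum_idOnDivisors_mul_powOmega_le (hb : b ≠ 0) {C : ℝ} (hC : 1 ≤ C) {t : ℝ} (ht : 0 ≤ t) :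
    ∑ n ∈ Ioc 0 ⌊t⌋₊, (idOnDivisors b * powOmega C) n ≤
      #b.divisors * (powOmegaConst C * t * Real.log (t + 2) ^ (C - 1)) := by
  set M := powOmegaConst C * t * Real.log (t + 2) ^ (C - 1)
  have hM : 0 ≤ M := by
    have := powOmegaConst_pos (zero_le_one.trans hC)
    have := Real.log_nonneg (by linarith : 1 ≤ t + 2)
    positivity
  have hsubset : {d ∈ Ioc 0 ⌊t⌋₊ | d ∣ b} ⊆ b.divisors := fun d hd =>
    Nat.mem_divisors.2 ⟨(mem_filter.1 hd).2, hb⟩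
  calc ∑ n ∈ Ioc 0 ⌊t⌋₊, (idOnDivisors b * powOmega C) n
      = ∑ d ∈ Ioc 0 ⌊t⌋₊ with d ∣ b, d * ∑ m ∈ Ioc 0 (⌊t⌋₊ / d), powOmega C m := by
        rw [ArithmeticFunction.sum_Ioc_mul_eq_sum_sum, sum_filter]
        simp only [idOnDivisors, ArithmeticFunction.coe_mk, ite_mul, zero_mul]
    _ ≤ ∑ d ∈ Ioc 0 ⌊t⌋₊ with d ∣ b, M :=
        sum_le_sum fun d hd =>
          mul_sum_powOmega_div_le hC ht (mem_Ioc.1 (mem_filter.1 hd).1).1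
    _ ≤ #b.divisors * M := by
        rw [sum_const, nsmul_eq_mul]
        gcongr

end Weights

theorem sum_dconv_mul_le_general {R : Type*} [NormedCommRing R] [NormOneClass R]
    {b : ℕ} {C₁ C₂ C₃ : ℝ} {θ : ℕ → R} {c : R} {A : ℕ → ℕ → R}
    (hb : b ≠ 0) (hC₁ : 1 ≤ C₁) (hC₂ : 1 ≤ C₂) (hE : HasEulerFactors θ c A)
    (hdvd : ∀ p ν : ℕ, p.Prime → 1 ≤ ν → p ^ ν ∣ b → ‖A p ν - A p (ν - 1)‖ ≤ C₁)
    (hndvd : ∀ p ν : ℕ, p.Prime → 1 ≤ ν → ¬ p ^ ν ∣ b →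
      ‖A p ν - A p (ν - 1)‖ ≤ C₂ / (p : ℝ) ^ ν)
    (hC₃ : ∀ k : ℕ, 0 < k → ‖c * ∏' p : {p : ℕ // p.Prime ∧ ¬ p ∣ k}, A p 0‖ ≤ C₃)
    {t : ℝ} (ht : 0 ≤ t) :
    ∑ n ∈ Icc 1 ⌊t⌋₊, ‖moebiusConv θ n‖ * n ≤
      powOmegaConst C₂ * #b.divisors * C₁ ^ #b.primeFactors * C₃ *
        t * Real.log (t + 2) ^ (C₂ - 1) := by
  have hC₃_nonneg : 0 ≤ C₃ := (norm_nonneg _).trans (hC₃ 1 one_pos)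
  calc ∑ n ∈ Icc 1 ⌊t⌋₊, ‖moebiusConv θ n‖ * n
      ≤ ∑ n ∈ Ioc 0 ⌊t⌋₊,
          C₃ * (C₁ ^ #b.primeFactors * (idOnDivisors b * powOmega C₂) n) := by
        refine sum_le_sum fun n hn => ?_
        have hn0 : 0 < n := (mem_Ioc.1 hn).1
        exact (norm_moebiusConv_mul_le hE hdvd hndvd hn0.ne' (hC₃ n hn0)).trans
          (mul_le_mul_of_nonneg_left (localWeight_le hb hC₁ hC₂ hn0.ne') hC₃_nonneg)
    _ ≤ C₃ * (C₁ ^ #b.primeFactors *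
          (#b.divisors * (powOmegaConst C₂ * t * Real.log (t + 2) ^ (C₂ - 1)))) := by
        rw [← mul_sum, ← mul_sum]
        gcongr
        exact sum_idOnDivisors_mul_powOmega_le hb hC₂ ht
    _ = powOmegaConst C₂ * #b.divisors * C₁ ^ #b.primeFactors * C₃ *
          t * Real.log (t + 2) ^ (C₂ - 1) := by ring

/-- For `θ ∈ Θ₂(b, C₁, C₂, C₃)`, one has
`∑_{0 < n ≤ t} |(θ∗μ)(n)| n ≪_{C₂} τ(b) (C₁C₂)^{ω(b)} C₃ t (log(t+2))^{C₂-1}`. -/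
theorem sum_dconv_mul_le (C₂ : ℝ) (hC₂ : 1 ≤ C₂) :
    ∃ K : ℝ, 0 < K ∧
      ∀ (b : ℕ) (C₁ C₃ : ℝ) (θ : ℕ → ℝ) (c : ℝ) (A : ℕ → ℕ → ℝ),
        0 < b → 1 ≤ C₁ → 1 ≤ C₃ →
        (∀ n : ℕ, 0 ≤ θ n) →
        EulerRep θ c A →
        SmallCond b C₁ C₂ C₃ c A →
        ∀ t : ℝ, 0 ≤ t →
          ∑ n ∈ Finset.Icc 1 ⌊t⌋₊, |dconv θ n| * n ≤
            K * b.divisors.card * (C₁ * C₂) ^ b.primeFactors.card * C₃ *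
              t * Real.log (t + 2) ^ (C₂ - 1) := by
  have hK : 0 < powOmegaConst C₂ := powOmegaConst_pos (zero_le_one.trans hC₂)
  refine ⟨powOmegaConst C₂, hK, fun b C₁ C₃ θ c A hb hC₁ hC₃ _ hE hS t ht => ?_⟩
  have hlog : 0 ≤ Real.log (t + 2) := Real.log_nonneg (by linarith)
  refine (sum_dconv_mul_le_general hb.ne' hC₁ hC₂ ⟨hE.2.1, hE.2.2⟩
    (fun p ν hp hν => (hS.1 p ν hp hν).1) (fun p ν hp hν => (hS.1 p ν hp hν).2)
    hS.2 ht).trans ?_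
  gcongr
  exact le_mul_of_one_le_right (by linarith) hC₂
end
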